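/- arXiv:2312.15381 — 13 statements merged into one kernel-verified Lean document; each statement's English description precedes it below -/
import Mathlib

section
/- With parthood defined by P x y ↔ ∃ zz, F zz y ∧ x ∈ zz, one has for all individuals x, y: P x y if and only if F ({x} ∪ {y}) y. -/
/-- Components of `zz`: all objects that are one of some plurality fusing to a member of `zz`. -/
def Ucomp {α : Type*} (F : Set α → α → Prop) (zz : Set α) : Set α :=
  {u | ∃ z ∈ zz, ∃ yy, F yy z ∧ u ∈ yy}

/-- Parthood defined from fusion: `x` is part of `y` iff `y` fuses some plurality containing `x`. -/
def PartF {α : Type*} (F : Set α → α → Prop) (x y : α) : Prop :=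
  ∃ zz, F zz y ∧ x ∈ zz

/-- Overlap defined from the fusion-induced parthood. -/
def OvF {α : Type*} (F : Set α → α → Prop) (x y : α) : Prop :=
  ∃ z, PartF F z x ∧ PartF F z y

theorem part_iff_fusion_pair {α : Type*} (F : Set α → α → Prop)
    (exF : ∀ zz : Set α, zz.Nonempty → ∃ y, F zz y)
    (extF : ∀ (zz yy uu : Set α) (x v : α),
      F zz x → F yy x → F (uu ∪ zz) v → F (uu ∪ yy) v)
    (idF : ∀ x y : α, F {y} x → x = y)
    (compF : ∀ (zz : Set α) (x y : α), F (zz ∪ {x}) y → F zz y →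
      ∃ vv, vv ⊆ Ucomp F zz ∧ F vv x ∧ vv.Nonempty)
    (wspF : ∀ x y : α, F ({x} ∪ {y}) y → x ≠ y →
      ∃ z ∈ Ucomp F {y}, ¬ ∃ u, F (Ucomp F {x} ∩ Ucomp F {z}) u) :
    ∀ x y : α, PartF F x y ↔ F ({x} ∪ {y}) y := by
  intro x y
  constructor
  · rintro ⟨zz, hzz, hx⟩
    have hy : F {y} y := by
      obtain ⟨w, hw⟩ := exF {y} (Set.singleton_nonempty y)
      exact idF w y hw ▸ hw
    refine extF zz {y} {x} y y hzz hy ?_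
    rwa [Set.union_eq_self_of_subset_left (Set.singleton_subset_iff.mpr hx)]
  · exact fun h => ⟨_, h, Or.inl rfl⟩
end

section
/- The defined parthood relation P is antisymmetric: for all individuals x, y, if P x y and P y x then x = y. -/
theorem part_antisymm {α : Type*} (F : Set α → α → Prop)
    (exF : ∀ zz : Set α, zz.Nonempty → ∃ y, F zz y)
    (extF : ∀ (zz yy uu : Set α) (x v : α),
      F zz x → F yy x → F (uu ∪ zz) v → F (uu ∪ yy) v)
    (idF : ∀ x y : α, F {y} x → x = y)
    (compF : ∀ (zz : Set α) (x y : α), F (zz ∪ {x}) y → F zz y →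
      ∃ vv, vv ⊆ Ucomp F zz ∧ F vv x ∧ vv.Nonempty)
    (wspF : ∀ x y : α, F ({x} ∪ {y}) y → x ≠ y →
      ∃ z ∈ Ucomp F {y}, ¬ ∃ u, F (Ucomp F {x} ∩ Ucomp F {z}) u) :
    ∀ x y : α, PartF F x y → PartF F y x → x = y := by
  have fself : ∀ a, F {a} a := fun a => by
    obtain ⟨b, hb⟩ := exF {a} (Set.singleton_nonempty a)
    exact idF b a hb ▸ hb
  have unique : ∀ (zz : Set α) (a b : α), F zz a → F zz b → b = a := fun zz a b ha hb => by
    have h := extF zz {a} ∅ a b ha (fself a) (by rwa [Set.empty_union])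
    rw [Set.empty_union] at h
    exact idF b a h
  have pair : ∀ a b, PartF F a b → F ({a} ∪ {b}) b := by
    rintro a b ⟨zz, hzz, ha⟩
    refine extF zz {b} {a} b b hzz (fself b) ?_
    rwa [Set.union_eq_self_of_subset_left (Set.singleton_subset_iff.2 ha)]
  intro x y hxy hyx
  exact unique _ y x (pair x y hxy) (Set.union_comm {y} {x} ▸ pair y x hyx)
end

section
/- The defined parthood relation P is transitive: for all individuals x, y, z, if P x y and P y z then P x z. -/
theorem part_trans {α : Type*} (F : Set α → α → Prop)
    (exF : ∀ zz : Set α, zz.Nonempty → ∃ y, F zz y)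
    (extF : ∀ (zz yy uu : Set α) (x v : α),
      F zz x → F yy x → F (uu ∪ zz) v → F (uu ∪ yy) v)
    (idF : ∀ x y : α, F {y} x → x = y)
    (compF : ∀ (zz : Set α) (x y : α), F (zz ∪ {x}) y → F zz y →
      ∃ vv, vv ⊆ Ucomp F zz ∧ F vv x ∧ vv.Nonempty)
    (wspF : ∀ x y : α, F ({x} ∪ {y}) y → x ≠ y →
      ∃ z ∈ Ucomp F {y}, ¬ ∃ u, F (Ucomp F {x} ∩ Ucomp F {z}) u) :
    ∀ x y z : α, PartF F x y → PartF F y z → PartF F x z := by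
  rintro x y z ⟨xx, hxx, hx⟩ ⟨yy, hyy, hy⟩
  have hself : F {y} y := by
    obtain ⟨w, hw⟩ := exF {y} (Set.singleton_nonempty y)
    rwa [idF w y hw] at hw
  have habsorb : yy ∪ {y} = yy :=
    Set.union_eq_self_of_subset_right (Set.singleton_subset_iff.mpr hy)
  exact ⟨yy ∪ xx, extF {y} xx yy y z hself hxx (habsorb.symm ▸ hyy), Or.inr hx⟩
end

section
/- Fusion is unique: for every plurality zz and individuals x, y, if F zz x and F zz y then x = y. -/
theorem fusion_unique {α : Type*} (F : Set α → α → Prop)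
    (exF : ∀ zz : Set α, zz.Nonempty → ∃ y, F zz y)
    (extF : ∀ (zz yy uu : Set α) (x v : α),
      F zz x → F yy x → F (uu ∪ zz) v → F (uu ∪ yy) v)
    (idF : ∀ x y : α, F {y} x → x = y)
    (compF : ∀ (zz : Set α) (x y : α), F (zz ∪ {x}) y → F zz y →
      ∃ vv, vv ⊆ Ucomp F zz ∧ F vv x ∧ vv.Nonempty)
    (wspF : ∀ x y : α, F ({x} ∪ {y}) y → x ≠ y →
      ∃ z ∈ Ucomp F {y}, ¬ ∃ u, F (Ucomp F {x} ∩ Ucomp F {z}) u) :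
    ∀ (zz : Set α) (x y : α), F zz x → F zz y → x = y := by
  intro zz x y hx hy
  obtain ⟨w, hw⟩ := exF {x} (Set.singleton_nonempty x)
  obtain rfl := idF w x hw
  have h := extF zz {w} ∅ w y hx hw (by rwa [Set.empty_union])
  rw [Set.empty_union] at h
  exact (idF y w h).symm
end

section
/- Every primitive fusion is a fusion in Leśniewski's sense: if F zz x, then every y in zz satisfies P y x, and for every y with P y x there exists v in zz that overlaps y (O v y). -/
theorem fusion_to_lesniewski {α : Type*} (F : Set α → α → Prop)
    (exF : ∀ zz : Set α, zz.Nonempty → ∃ y, F zz y)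
    (extF : ∀ (zz yy uu : Set α) (x v : α),
      F zz x → F yy x → F (uu ∪ zz) v → F (uu ∪ yy) v)
    (idF : ∀ x y : α, F {y} x → x = y)
    (compF : ∀ (zz : Set α) (x y : α), F (zz ∪ {x}) y → F zz y →
      ∃ vv, vv ⊆ Ucomp F zz ∧ F vv x ∧ vv.Nonempty)
    (wspF : ∀ x y : α, F ({x} ∪ {y}) y → x ≠ y →
      ∃ z ∈ Ucomp F {y}, ¬ ∃ u, F (Ucomp F {x} ∩ Ucomp F {z}) u) :
    ∀ (zz : Set α) (x : α), F zz x →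
      (∀ y ∈ zz, PartF F y x) ∧ ∀ y, PartF F y x → ∃ v ∈ zz, OvF F v y := by
  intro zz x hzz
  refine ⟨fun y hy => ⟨zz, hzz, hy⟩, ?_⟩
  rintro y ⟨yy, hyy, hy⟩
  have hy_yy : F ({y} ∪ yy) x := by
    rwa [Set.union_eq_self_of_subset_left (Set.singleton_subset_iff.mpr hy)]
  have hzz_y : F (zz ∪ {y}) x := by
    rw [Set.union_comm]
    exact extF yy zz {y} x x hyy hzz hy_yy
  obtain ⟨vv, hsub, hvv, w, hw⟩ := compF zz y x hzz_y hzz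
  obtain ⟨v, hv, uu, huu, hwu⟩ := hsub hw
  exact ⟨v, hv, w, ⟨uu, huu, hwu⟩, ⟨vv, hvv, hw⟩⟩
end

section
/- For every individual x and individual y, if F (U {x}) y then x = y; that is, the only fusion of all components of x is x itself. -/
/-- Every individual is the fusion of its singleton. -/
theorem fusion_singleton {α : Type*} {F : Set α → α → Prop}
    (exF : ∀ zz : Set α, zz.Nonempty → ∃ y, F zz y)
    (idF : ∀ x y : α, F {y} x → x = y) (x : α) : F {x} x := by
  obtain ⟨y, hy⟩ := exF {x} (Set.singleton_nonempty x)
  obtain rfl := idF y x hy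
  exact hy

/-- A part can be adjoined to the singleton of the whole without changing the fusion. -/
theorem fusion_pair_of_mem {α : Type*} {F : Set α → α → Prop}
    (extF : ∀ (zz yy uu : Set α) (x v : α),
      F zz x → F yy x → F (uu ∪ zz) v → F (uu ∪ yy) v)
    (hself : ∀ x, F {x} x) {zz : Set α} {a x : α} (h : F zz x) (ha : a ∈ zz) :
    F ({a} ∪ {x}) x := by
  refine extF zz {x} {a} x x h (hself x) ?_
  rwa [Set.union_eq_self_of_subset_left (Set.singleton_subset_iff.2 ha)]

/-- The parthood induced by fusion is transitive. -/
theorem partF_trans {α : Type*} {F : Set α → α → Prop}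
    (extF : ∀ (zz yy uu : Set α) (x v : α),
      F zz x → F yy x → F (uu ∪ zz) v → F (uu ∪ yy) v)
    (hself : ∀ x, F {x} x) {a b c : α} (hab : PartF F a b) (hbc : PartF F b c) :
    PartF F a c := by
  obtain ⟨zz, hzz, ha⟩ := hab
  obtain ⟨yy, hyy, hb⟩ := hbc
  refine ⟨yy ∪ zz, extF {b} zz yy b c (hself b) hzz ?_, Or.inr ha⟩
  rwa [Set.union_eq_self_of_subset_right (Set.singleton_subset_iff.2 hb)]

/-- The components of a single individual are its parts. -/
theorem mem_Ucomp_singleton {α : Type*} {F : Set α → α → Prop} {a x : α} :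
    a ∈ Ucomp F {x} ↔ PartF F a x := by
  simp [Ucomp, PartF]

theorem fusion_components_unique {α : Type*} (F : Set α → α → Prop)
    (exF : ∀ zz : Set α, zz.Nonempty → ∃ y, F zz y)
    (extF : ∀ (zz yy uu : Set α) (x v : α),
      F zz x → F yy x → F (uu ∪ zz) v → F (uu ∪ yy) v)
    (idF : ∀ x y : α, F {y} x → x = y)
    (compF : ∀ (zz : Set α) (x y : α), F (zz ∪ {x}) y → F zz y →
      ∃ vv, vv ⊆ Ucomp F zz ∧ F vv x ∧ vv.Nonempty)
    (wspF : ∀ x y : α, F ({x} ∪ {y}) y → x ≠ y →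
      ∃ z ∈ Ucomp F {y}, ¬ ∃ u, F (Ucomp F {x} ∩ Ucomp F {z}) u) :
    ∀ x y : α, F (Ucomp F {x}) y → x = y := by
  intro x y hy
  have hself := fusion_singleton exF idF
  by_contra hne
  have hxy : F ({x} ∪ {y}) y :=
    fusion_pair_of_mem extF hself hy (mem_Ucomp_singleton.2 ⟨{x}, hself x, rfl⟩)
  obtain ⟨z, hz, hdisj⟩ := wspF x y hxy hne
  obtain ⟨zz, hzz, hzmem⟩ := mem_Ucomp_singleton.1 hz
  have hzU : F (Ucomp F {x} ∪ {z}) y := by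
    rw [Set.union_comm]
    exact extF {y} _ {z} y y (hself y) hy (fusion_pair_of_mem extF hself hzz hzmem)
  obtain ⟨vv, hvv, hvz, v, hv⟩ := compF _ z y hzU hy
  obtain ⟨w, hw, hvw⟩ := hvv hv
  exact hdisj (exF _ ⟨v,
    mem_Ucomp_singleton.2 (partF_trans extF hself hvw (mem_Ucomp_singleton.1 hw)),
    mem_Ucomp_singleton.2 ⟨vv, hvz, hv⟩⟩)
end

section
/- For every individual x, F (U {x}) x: x is the fusion of all of its components. -/
theorem fusion_of_components {α : Type*} (F : Set α → α → Prop)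
    (exF : ∀ zz : Set α, zz.Nonempty → ∃ y, F zz y)
    (extF : ∀ (zz yy uu : Set α) (x v : α),
      F zz x → F yy x → F (uu ∪ zz) v → F (uu ∪ yy) v)
    (idF : ∀ x y : α, F {y} x → x = y)
    (compF : ∀ (zz : Set α) (x y : α), F (zz ∪ {x}) y → F zz y →
      ∃ vv, vv ⊆ Ucomp F zz ∧ F vv x ∧ vv.Nonempty)
    (wspF : ∀ x y : α, F ({x} ∪ {y}) y → x ≠ y →
      ∃ z ∈ Ucomp F {y}, ¬ ∃ u, F (Ucomp F {x} ∩ Ucomp F {z}) u) :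
    ∀ x : α, F (Ucomp F {x}) x := by
  intro x
  have refl : ∀ y, F {y} y := fun y => by
    obtain ⟨w, hw⟩ := exF {y} ⟨y, rfl⟩
    rwa [idF w y hw] at hw
  have absorb : ∀ {u : α} {yy : Set α} {y : α}, F yy y → u ∈ yy → F ({u} ∪ yy) y :=
    fun hyy hu => by rwa [Set.union_eq_self_of_subset_left (Set.singleton_subset_iff.2 hu)]
  have hx : x ∈ Ucomp F {x} := ⟨x, rfl, {x}, refl x, rfl⟩
  -- Transitivity of parthood: components of components of `x` are components of `x`.
  have trans : Ucomp F (Ucomp F {x}) ⊆ Ucomp F {x} := by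
    rintro u ⟨w, ⟨y, rfl, yy, hyy, hw⟩, zz, hzz, hu⟩
    refine ⟨y, rfl, yy ∪ zz, extF {w} zz yy w y (refl w) hzz ?_, Or.inr hu⟩
    rw [Set.union_comm]
    exact absorb hyy hw
  obtain ⟨s, hs⟩ := exF (Ucomp F {x}) ⟨x, hx⟩
  by_cases hxs : x = s
  · rwa [← hxs] at hs
  -- Otherwise supplementation yields a part of `s` disjoint from `x`, contradicting `compF`.
  obtain ⟨z, ⟨y, rfl, yy, hyy, hz⟩, hdisj⟩ :=
    wspF x s (extF _ {s} {x} s s hs (refl s) (absorb hs hx)) hxs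
  have hzs : F (Ucomp F {x} ∪ {z}) y := by
    rw [Set.union_comm]
    exact extF yy _ {z} y y hyy hs (absorb hyy hz)
  obtain ⟨vv, hvv, hvz, v, hv⟩ := compF _ z y hzs hs
  exact (hdisj (exF _ ⟨v, trans (hvv hv), z, rfl, vv, hvz, hv⟩)).elim
end

section
/- The primitive fusion coincides with Leśniewski fusion: F zz x if and only if every y in zz satisfies P y x and for every y with P y x there exists v in zz with O v y. -/
theorem fusion_iff_lesniewski {α : Type*} (F : Set α → α → Prop)
    (exF : ∀ zz : Set α, zz.Nonempty → ∃ y, F zz y)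
    (extF : ∀ (zz yy uu : Set α) (x v : α),
      F zz x → F yy x → F (uu ∪ zz) v → F (uu ∪ yy) v)
    (idF : ∀ x y : α, F {y} x → x = y)
    (compF : ∀ (zz : Set α) (x y : α), F (zz ∪ {x}) y → F zz y →
      ∃ vv, vv ⊆ Ucomp F zz ∧ F vv x ∧ vv.Nonempty)
    (wspF : ∀ x y : α, F ({x} ∪ {y}) y → x ≠ y →
      ∃ z ∈ Ucomp F {y}, ¬ ∃ u, F (Ucomp F {x} ∩ Ucomp F {z}) u) :
    ∀ (zz : Set α) (x : α), F zz x ↔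
      (∀ y ∈ zz, PartF F y x) ∧ ∀ y, PartF F y x → ∃ v ∈ zz, OvF F v y := by
  have F_singleton (y : α) : F {y} y := by
    obtain ⟨x, hx⟩ := exF {y} (Set.singleton_nonempty y)
    obtain rfl := idF x y hx
    exact hx
  have part_refl (y : α) : PartF F y y := ⟨{y}, F_singleton y, rfl⟩
  have F_union_of_part {x y : α} {zz : Set α} (hxy : PartF F x y) (hz : F zz y) :
      F ({x} ∪ zz) y := by
    obtain ⟨yy, hy, hx⟩ := hxy
    refine extF yy zz {x} y y hy hz ?_
    rwa [Set.union_eq_right.2 (Set.singleton_subset_iff.2 hx)]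
  have part_trans {x y z : α} (hxy : PartF F x y) (hyz : PartF F y z) : PartF F x z := by
    have hz : F ({z} ∪ {y}) z := by
      rw [Set.union_comm]
      exact F_union_of_part hyz (F_singleton z)
    exact ⟨_, extF {y} ({x} ∪ {y}) {z} y z (F_singleton y)
      (F_union_of_part hxy (F_singleton y)) hz, Or.inr (Or.inl rfl)⟩
  have overlap_of_fusion {zz : Set α} {x y : α} (hz : F zz x) (hy : PartF F y x) :
      ∃ v ∈ zz, OvF F v y := by
    have hu := F_union_of_part hy hz
    rw [Set.union_comm] at hu
    obtain ⟨vv, hvv, hvy, v, hv⟩ := compF zz y x hu hz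
    obtain ⟨z, hzz, hvz⟩ := hvv hv
    exact ⟨z, hzz, v, hvz, vv, hvy, hv⟩
  have eq_of_part_of_overlap {x y : α} (hxy : PartF F x y)
      (h : ∀ z, PartF F z y → OvF F x z) : x = y := by
    by_contra hne
    obtain ⟨z, ⟨_, rfl, hz⟩, hdisj⟩ := wspF x y (F_union_of_part hxy (F_singleton y)) hne
    obtain ⟨u, hux, huz⟩ := h z hz
    exact hdisj (exF _ ⟨u, ⟨x, rfl, hux⟩, ⟨z, rfl, huz⟩⟩)
  intro zz x
  refine ⟨fun h => ⟨fun y hy => ⟨zz, h, hy⟩, fun y hy => overlap_of_fusion h hy⟩, ?_⟩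
  rintro ⟨hpart, hover⟩
  obtain ⟨v, hv, -⟩ := hover x (part_refl x)
  obtain ⟨w, hw⟩ := exF zz ⟨v, hv⟩
  obtain ⟨s, hs⟩ := exF ({x} ∪ zz) ⟨v, Or.inr hv⟩
  have hxs : x = s := by
    refine eq_of_part_of_overlap ⟨_, hs, Or.inl rfl⟩ fun z hz => ?_
    obtain ⟨t, ht, u, hut, huz⟩ := overlap_of_fusion hs hz
    have htx : PartF F t x := by
      rcases ht with rfl | ht
      · exact part_refl t
      · exact hpart t ht
    exact ⟨u, part_trans hut htx, huz⟩
  have hwx : w = x := by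
    subst hxs
    refine eq_of_part_of_overlap
      ⟨_, extF zz {w} {x} w x hw (F_singleton w) hs, Or.inr rfl⟩ fun z hz => ?_
    obtain ⟨t, ht, u, hut, huz⟩ := hover z hz
    exact ⟨u, part_trans hut ⟨zz, hw, ht⟩, huz⟩
  exact hwx ▸ hw
end

section
/- The weak supplementation principle holds in classical mereology: if PP x y (x is a proper part of y), then there exists z with PP z y and ¬ O z x. -/
/-- Overlap: `x` and `y` share a common part. -/
def OvP {α : Type*} (P : α → α → Prop) (x y : α) : Prop :=
  ∃ z, P z x ∧ P z y

/-- Proper parthood. -/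
def PPP {α : Type*} (P : α → α → Prop) (x y : α) : Prop :=
  P x y ∧ x ≠ y

/-- Leśniewski fusion: `x` fuses `zz` iff every member of `zz` is part of `x`
and every part of `x` overlaps some member of `zz`. -/
def FusL {α : Type*} (P : α → α → Prop) (zz : Set α) (x : α) : Prop :=
  (∀ y ∈ zz, P y x) ∧ ∀ y, P y x → ∃ v ∈ zz, OvP P v y

/-- Components of `zz`: everything that is part of some member of `zz`. -/
def UP {α : Type*} (P : α → α → Prop) (zz : Set α) : Set α :=
  {u | ∃ w ∈ zz, P u w}

theorem weak_supplementation {α : Type*} (P : α → α → Prop)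
    (hrefl : ∀ x : α, P x x)
    (hanti : ∀ x y : α, P x y → P y x → x = y)
    (htrans : ∀ x y z : α, P x y → P y z → P x z)
    (hex : ∀ zz : Set α, zz.Nonempty → ∃ x, FusL P zz x)
    (huniq : ∀ (zz : Set α) (x y : α), FusL P zz x → FusL P zz y → x = y) :
    ∀ x y : α, PPP P x y → ∃ z, PPP P z y ∧ ¬ OvP P z x := by
  rintro x y ⟨hxy, hne⟩
  by_contra! h
  refine hne (huniq {x} x y ⟨?_, fun z hz => ⟨x, rfl, z, hz, hrefl z⟩⟩
    ⟨?_, fun z hz => ⟨x, rfl, ?_⟩⟩)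
  · rintro z rfl
    exact hrefl z
  · rintro z rfl
    exact hxy
  · by_cases hzy : z = y
    · subst hzy
      exact ⟨x, hrefl x, hxy⟩
    · obtain ⟨w, hwz, hwx⟩ := h z ⟨hz, hzy⟩
      exact ⟨w, hwx, hwz⟩
end

section
/- In classical mereology, fusion coincides with minimal upper bound: F zz x if and only if zz is nonempty, every y in zz satisfies P y x, and for every y such that all v in zz satisfy P v y one has P x y. -/
/-- Strong supplementation: if every part of `x` overlaps `y`, then `x` is part of `y`. -/
theorem part_of_forall_part_overlaps {α : Type*} {P : α → α → Prop}
    (hrefl : ∀ x : α, P x x)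
    (htrans : ∀ x y z : α, P x y → P y z → P x z)
    (hex : ∀ zz : Set α, zz.Nonempty → ∃ x, FusL P zz x)
    (huniq : ∀ (zz : Set α) (x y : α), FusL P zz x → FusL P zz y → x = y)
    {x y : α} (h : ∀ w, P w x → OvP P w y) : P x y := by
  obtain ⟨z, hz, hov⟩ := hex {x, y} ⟨x, by simp⟩
  have hzy : FusL P {y} z := by
    refine ⟨fun v hv => hz v (Or.inr hv), fun w hw => ⟨y, rfl, ?_⟩⟩
    obtain ⟨v, rfl | rfl, u, huv, huw⟩ := hov w hw
    · obtain ⟨t, htu, hty⟩ := h u huv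
      exact ⟨t, hty, htrans _ _ _ htu huw⟩
    · exact ⟨u, huv, huw⟩
  have hyy : FusL P {y} y :=
    ⟨fun v hv => hv ▸ hrefl v, fun w hw => ⟨y, rfl, w, hw, hrefl w⟩⟩
  exact huniq _ _ _ hzy hyy ▸ hz x (Or.inl rfl)

/-- A fusion of `zz` is part of every upper bound of `zz`. -/
theorem FusL.part_of_upper_bound {α : Type*} {P : α → α → Prop}
    (hrefl : ∀ x : α, P x x)
    (htrans : ∀ x y z : α, P x y → P y z → P x z)
    (hex : ∀ zz : Set α, zz.Nonempty → ∃ x, FusL P zz x)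
    (huniq : ∀ (zz : Set α) (x y : α), FusL P zz x → FusL P zz y → x = y)
    {zz : Set α} {x y : α} (hx : FusL P zz x) (hy : ∀ v ∈ zz, P v y) : P x y := by
  refine part_of_forall_part_overlaps hrefl htrans hex huniq fun w hw => ?_
  obtain ⟨v, hv, u, huv, huw⟩ := hx.2 w hw
  exact ⟨u, huw, htrans _ _ _ huv (hy v hv)⟩

theorem fusion_eq_mub {α : Type*} (P : α → α → Prop)
    (hrefl : ∀ x : α, P x x)
    (hanti : ∀ x y : α, P x y → P y x → x = y)
    (htrans : ∀ x y z : α, P x y → P y z → P x z)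
    (hex : ∀ zz : Set α, zz.Nonempty → ∃ x, FusL P zz x)
    (huniq : ∀ (zz : Set α) (x y : α), FusL P zz x → FusL P zz y → x = y) :
    ∀ (zz : Set α) (x : α), FusL P zz x ↔
      zz.Nonempty ∧ (∀ y ∈ zz, P y x) ∧ ∀ y, (∀ v ∈ zz, P v y) → P x y := by
  intro zz x
  constructor
  · intro hx
    obtain ⟨v, hv, -⟩ := hx.2 x (hrefl x)
    exact ⟨⟨v, hv⟩, hx.1, fun y => hx.part_of_upper_bound hrefl htrans hex huniq⟩
  · rintro ⟨hne, hub, hmin⟩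
    obtain ⟨z, hz⟩ := hex zz hne
    have hzx : z = x :=
      hanti z x (hz.part_of_upper_bound hrefl htrans hex huniq hub) (hmin z hz.1)
    exact hzx ▸ hz
end

section
/- In classical mereology, the principle of fusion extensionality holds: if F zz x, F yy x, and F (uu ∪ zz) v, then F (uu ∪ yy) v. -/
/-- Overlap is monotone in both arguments. -/
theorem OvP.mono {α : Type*} {P : α → α → Prop}
    (htrans : ∀ x y z : α, P x y → P y z → P x z) {a b c d : α}
    (h : OvP P a c) (hab : P a b) (hcd : P c d) : OvP P b d := by
  obtain ⟨z, hza, hzc⟩ := h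
  exact ⟨z, htrans _ _ _ hza hab, htrans _ _ _ hzc hcd⟩

/-- Strong supplementation: if every part of `x` overlaps `v`, then `x` is part of `v`. -/
theorem part_of_forall_overlap {α : Type*} {P : α → α → Prop}
    (hrefl : ∀ x : α, P x x)
    (htrans : ∀ x y z : α, P x y → P y z → P x z)
    (hex : ∀ zz : Set α, zz.Nonempty → ∃ x, FusL P zz x)
    (huniq : ∀ (zz : Set α) (x y : α), FusL P zz x → FusL P zz y → x = y)
    {x v : α} (h : ∀ y, P y x → OvP P v y) : P x v := by
  obtain ⟨w, hw, hw'⟩ := hex {x, v} ⟨x, by simp⟩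
  have hv : FusL P {v} v :=
    ⟨by rintro y rfl; exact hrefl y, fun y hy => ⟨v, rfl, y, hy, hrefl y⟩⟩
  have hwv : FusL P {v} w := by
    refine ⟨by rintro y rfl; exact hw y (by simp), fun y hy => ⟨v, rfl, ?_⟩⟩
    obtain ⟨a, rfl | rfl, ha⟩ := hw' y hy
    · obtain ⟨t, hta, hty⟩ := ha
      exact (h t hta).mono htrans (hrefl v) hty
    · exact ha
  rw [huniq _ _ _ hv hwv]
  exact hw x (by simp)

theorem fusion_ext {α : Type*} (P : α → α → Prop)
    (hrefl : ∀ x : α, P x x)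
    (hanti : ∀ x y : α, P x y → P y x → x = y)
    (htrans : ∀ x y z : α, P x y → P y z → P x z)
    (hex : ∀ zz : Set α, zz.Nonempty → ∃ x, FusL P zz x)
    (huniq : ∀ (zz : Set α) (x y : α), FusL P zz x → FusL P zz y → x = y) :
    ∀ (zz yy uu : Set α) (x v : α),
      FusL P zz x → FusL P yy x → FusL P (uu ∪ zz) v → FusL P (uu ∪ yy) v := by
  intro zz yy uu x v hz hy hv
  have hxv : P x v := by
    refine part_of_forall_overlap hrefl htrans hex huniq fun t ht => ?_
    obtain ⟨a, ha, hat⟩ := hz.2 t ht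
    exact hat.mono htrans (hv.1 a (Or.inr ha)) (hrefl t)
  refine ⟨?_, fun y hyv => ?_⟩
  · rintro a (ha | ha)
    · exact hv.1 a (Or.inl ha)
    · exact htrans _ _ _ (hy.1 a ha) hxv
  · obtain ⟨a, ha | ha, hay⟩ := hv.2 y hyv
    · exact ⟨a, Or.inl ha, hay⟩
    · obtain ⟨t, hta, hty⟩ := hay
      obtain ⟨b, hb, hbt⟩ := hy.2 t (htrans _ _ _ hta (hz.1 a ha))
      exact ⟨b, Or.inr hb, hbt.mono htrans (hrefl b) hty⟩
end

section
/- In classical mereology, the principle of composition holds: if F (zz ∪ {x}) y and F zz y, then there exists a nonempty plurality vv with vv ⊆ U zz and F vv x, where U zz = {u | ∃ w ∈ zz, P u w}. -/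
theorem fusion_comp {α : Type*} (P : α → α → Prop)
    (hrefl : ∀ x : α, P x x)
    (hanti : ∀ x y : α, P x y → P y x → x = y)
    (htrans : ∀ x y z : α, P x y → P y z → P x z)
    (hex : ∀ zz : Set α, zz.Nonempty → ∃ x, FusL P zz x)
    (huniq : ∀ (zz : Set α) (x y : α), FusL P zz x → FusL P zz y → x = y) :
    ∀ (zz : Set α) (x y : α), FusL P (zz ∪ {x}) y → FusL P zz y →
      ∃ vv, vv ⊆ UP P zz ∧ FusL P vv x ∧ vv.Nonempty := by
  intro zz x y hxy hy
  have hx : P x y := hxy.1 x (Or.inr rfl)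
  have hov : ∀ t, P t x → ∃ v ∈ {u | u ∈ UP P zz ∧ P u x}, OvP P v t := by
    intro t ht
    obtain ⟨v, hv, z, hzv, hzt⟩ := hy.2 t (htrans t x y ht hx)
    exact ⟨z, ⟨⟨v, hv, hzv⟩, htrans z t x hzt ht⟩, z, hrefl z, hzt⟩
  obtain ⟨v, hv, -⟩ := hov x (hrefl x)
  exact ⟨{u | u ∈ UP P zz ∧ P u x}, fun u hu => hu.1, ⟨fun u hu => hu.2, hov⟩, v, hv⟩
end

section
/- In classical mereology, the fusion form of weak supplementation holds: if F ({x} ∪ {y}) y and x ≠ y, then there exists z ∈ U {y} such that there is no u with F (U {x} ∩ U {z}) u, where U zz = {u | ∃ w ∈ zz, P u w}. -/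
theorem fusion_wsp {α : Type*} (P : α → α → Prop)
    (hrefl : ∀ x : α, P x x)
    (hanti : ∀ x y : α, P x y → P y x → x = y)
    (htrans : ∀ x y z : α, P x y → P y z → P x z)
    (hex : ∀ zz : Set α, zz.Nonempty → ∃ x, FusL P zz x)
    (huniq : ∀ (zz : Set α) (x y : α), FusL P zz x → FusL P zz y → x = y) :
    ∀ x y : α, FusL P ({x} ∪ {y}) y → x ≠ y →
      ∃ z ∈ UP P {y}, ¬ ∃ u, FusL P (UP P {x} ∩ UP P {z}) u := by
  intro x y hy hne
  by_contra! hcon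
  refine hne (huniq {x} x y ⟨?_, fun w hw => ⟨x, rfl, w, hw, hrefl w⟩⟩ ⟨?_, fun z hz => ?_⟩)
  · rintro w rfl
    exact hrefl w
  · rintro w rfl
    exact hy.1 w (Or.inl rfl)
  · obtain ⟨u, -, hu⟩ := hcon z ⟨y, rfl, hz⟩
    obtain ⟨v, ⟨⟨_, rfl, hvx⟩, ⟨_, rfl, hvz⟩⟩, -⟩ := hu u (hrefl u)
    exact ⟨_, rfl, v, hvx, hvz⟩
end
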